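/- arXiv:1908.01533 — 2 statements merged into one kernel-verified Lean document; each statement's English description precedes it below -/
import Mathlib

section
/- Skeleton (cross) decomposition of a low-rank matrix: let F be a real m×n matrix with rank(F) = r, and let I : Fin r → Fin m and J : Fin r → Fin n be index maps such that the r×r intersection submatrix F(I,J) is invertible. Then F is exactly recovered from its sampled columns and rows: F = F(:,J) · (F(I,J))⁻¹ · F(I,:), where F(:,J) is the m×r matrix of columns indexed by J and F(I,:) is the r×n matrix of rows indexed by I. -/
open Matrix

/-- If some of the columns of `F` already have the rank of `F`, then `F` factors through them. -/
theorem Matrix.exists_eq_submatrix_mul_of_rank_le {m n p K : Type*} [Finite m] [Fintype n]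
    [Fintype p] [Field K] (F : Matrix m n K) (J : p → n)
    (h : F.rank ≤ (F.submatrix id J).rank) :
    ∃ X : Matrix p n K, F = F.submatrix id J * X := by
  have hle : LinearMap.range (F.submatrix id J).mulVecLin ≤ LinearMap.range F.mulVecLin := by
    rw [range_mulVecLin, range_mulVecLin]
    apply Submodule.span_mono
    rintro _ ⟨j, rfl⟩
    exact ⟨J j, rfl⟩
  have heq := Submodule.eq_of_le_of_finrank_le hle h
  have hcol (j : n) : ∃ x, F.submatrix id J *ᵥ x = F.col j := by
    have hj : F.col j ∈ LinearMap.range (F.submatrix id J).mulVecLin := by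
      rw [heq, range_mulVecLin]
      exact Submodule.subset_span ⟨j, rfl⟩
    exact hj
  choose x hx using hcol
  refine ⟨of fun i j => x j i, ?_⟩
  ext i j
  exact (congrFun (hx j) i).symm

/-- Skeleton (cross) decomposition of a low-rank matrix: if `rank F = r`
and the `r×r` intersection submatrix `F(I,J)` is invertible, then
`F = F(:,J) · F(I,J)⁻¹ · F(I,:)`. -/
theorem skeleton_cross_decomposition
    (m n r : ℕ) (F : Matrix (Fin m) (Fin n) ℝ) (hrank : F.rank = r)
    (I : Fin r → Fin m) (J : Fin r → Fin n)
    (hinv : IsUnit (F.submatrix I J).det) :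
    F = F.submatrix id J * (F.submatrix I J)⁻¹ * F.submatrix I id := by
  have hle : F.rank ≤ (F.submatrix id J).rank := by
    have hIJ : (F.submatrix I J).rank = r := by
      simpa using rank_of_isUnit _ ((isUnit_iff_isUnit_det _).2 hinv)
    exact (hrank.trans hIJ.symm).trans_le (rank_submatrix_le (F.submatrix id J) I id)
  obtain ⟨X, hX⟩ := F.exists_eq_submatrix_mul_of_rank_le J hle
  have hrows : F.submatrix I id = F.submatrix I J * X := by
    ext i j
    exact congrFun (congrFun hX (I i)) j
  rw [hrows, Matrix.mul_assoc, nonsing_inv_mul_cancel_left _ _ hinv]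
  exact hX
end

section
/- Let γ > 0, c > 0, and let 𝒫 : ℝ → ℝ be an odd, strictly monotonically increasing continuous function whose range is the open interval (−c, c), so that 𝒫 is a bijection from ℝ onto (−c, c) with inverse 𝒫⁻¹ : (−c,c) → ℝ. Define the control penalty W(u) = 2γ ∫₀ᵘ 𝒫⁻¹(μ) dμ for u ∈ (−c, c), and let b ∈ ℝ. Then the function u ↦ u·b + W(u) on (−c, c) attains a global minimum at the unique point u* = −𝒫(b/(2γ)). -/
open Set intervalIntegral

/-- The primitive of a function that is strictly increasing on an interval lies strictly above its
tangent line at `a`, except at `a`. -/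
theorem StrictMonoOn.sub_mul_lt_intervalIntegral {g : ℝ → ℝ} {s : Set ℝ} [s.OrdConnected]
    (hg : StrictMonoOn g s) {a u : ℝ} (ha : a ∈ s) (hu : u ∈ s) (hne : u ≠ a) :
    (u - a) * g a < ∫ x in a..u, g x := by
  have hsub : uIcc a u ⊆ s := OrdConnected.uIcc_subset ‹_› ha hu
  have hint : IntervalIntegrable g MeasureTheory.volume a u :=
    (hg.monotoneOn.mono hsub).intervalIntegrable
  rcases lt_or_gt_of_ne hne with h | h
  · have hpos : 0 < ∫ x in u..a, (g a - g x) := by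
      refine intervalIntegral_pos_of_pos_on (intervalIntegrable_const.sub hint.symm) ?_ h
      intro x hx
      exact sub_pos.2 (hg (hsub (uIcc_comm a u ▸ Ioo_subset_Icc_self.trans Icc_subset_uIcc hx))
        ha hx.2)
    rw [integral_sub intervalIntegrable_const hint.symm, integral_const, smul_eq_mul] at hpos
    rw [integral_symm]
    linarith
  · have hpos : 0 < ∫ x in a..u, (g x - g a) := by
      refine intervalIntegral_pos_of_pos_on (hint.sub intervalIntegrable_const) ?_ h
      intro x hx
      exact sub_pos.2 (hg ha (hsub (Ioo_subset_Icc_self.trans Icc_subset_uIcc hx)) hx.1)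
    rw [integral_sub hint intervalIntegrable_const, integral_const, smul_eq_mul] at hpos
    linarith

/-- For an odd, strictly increasing continuous `𝒫 : ℝ → ℝ` with range
`(−c, c)` and inverse `𝒫⁻¹`, the function `u ↦ ub + W(u)` with control penalty
`W(u) = 2γ ∫₀ᵘ 𝒫⁻¹(μ) dμ` attains its global minimum over `(−c, c)` at the unique
point `u* = −𝒫(b/(2γ))`. -/
theorem penalized_hamiltonian_minimizer
    (γ c : ℝ) (hγ : 0 < γ) (hc : 0 < c)
    (P Pinv : ℝ → ℝ)
    (hodd : ∀ x, P (-x) = -P x)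
    (hmono : StrictMono P)
    (hcont : Continuous P)
    (hrange : Set.range P = Set.Ioo (-c) c)
    (hinv : ∀ x, Pinv (P x) = x)
    (b : ℝ) :
    let W : ℝ → ℝ := fun u => 2 * γ * ∫ μ in (0 : ℝ)..u, Pinv μ
    let ustar : ℝ := -P (b / (2 * γ))
    ustar ∈ Set.Ioo (-c) c ∧
      ∀ u ∈ Set.Ioo (-c) c, u ≠ ustar →
        ustar * b + W ustar < u * b + W u := by
  intro W ustar
  have hstar : ustar = P (-(b / (2 * γ))) := (hodd _).symm
  have hmem : ustar ∈ Ioo (-c) c := by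
    rw [hstar, ← hrange]
    exact mem_range_self _
  refine ⟨hmem, fun u hu hne => ?_⟩
  have hg : StrictMonoOn Pinv (Ioo (-c) c) := by
    rw [← hrange]
    rintro _ ⟨x, rfl⟩ _ ⟨y, rfl⟩ hxy
    rw [hinv, hinv]
    exact hmono.lt_iff_lt.1 hxy
  have hzero : (0 : ℝ) ∈ Ioo (-c) c := ⟨neg_lt_zero.2 hc, hc⟩
  have hint : ∀ v ∈ Ioo (-c) c, IntervalIntegrable Pinv MeasureTheory.volume 0 v := fun v hv =>
    (hg.monotoneOn.mono (ordConnected_Ioo.uIcc_subset hzero hv)).intervalIntegrable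
  have hlt := hg.sub_mul_lt_intervalIntegral hmem hu hne
  have hval : Pinv ustar = -(b / (2 * γ)) := by rw [hstar, hinv]
  rw [← integral_interval_sub_left (hint u hu) (hint ustar hmem), hval] at hlt
  have hscaled := mul_lt_mul_of_pos_left hlt (mul_pos two_pos hγ)
  have htangent : 2 * γ * ((u - ustar) * -(b / (2 * γ))) = -(u - ustar) * b := by
    field_simp
  rw [htangent] at hscaled
  simp only [W]
  linarith
end
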